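/- Let r ∈ [1,3] be a real number and μ > 0, β > 0. Let u, v : ℝ² → ℝ² be smooth, compactly supported, divergence-free vector fields, set w = u − v, and let N ≥ 0 satisfy ∫_{ℝ²} |v(x)|⁴ dx ≤ N⁴. Then μ ∫_{ℝ²} |∇w|² dx + ∫_{ℝ²} Σ_{i,j} (u_i ∂_i u_j − v_i ∂_i v_j) w_j dx + β ∫_{ℝ²} (|u|^{r−1}u − |v|^{r−1}v)·w dx + (27/(32μ³)) N⁴ ∫_{ℝ²} |w|² dx ≥ 0, where |∇w|² = Σ_{i,j} (∂w_j/∂x_i)², |·| is the Euclidean norm, · the Euclidean inner product, and integrals are with respect to Lebesgue measure. -/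

import Mathlib

open MeasureTheory
open scoped RealInnerProductSpace

/-!
Put `w = u - v`. The Forchheimer term is nonnegative because `t ↦ t ^ r` is monotone. In
`(u·∇)u - (v·∇)v = (u·∇)w + (w·∇)v` both transporting fields are divergence-free, so integrating by
parts against `w` kills the first summand and turns the second into `-∫ ⟪v, (w·∇)w⟫`. Two
applications of Cauchy–Schwarz and Ladyzhenskaya's inequality `‖w‖₄⁴ ≤ 8 ‖∇w‖₂² ‖w‖₂²` bound the
fourth power of this integral by `8 ‖∇w‖₂⁶ ‖w‖₂² ‖v‖₄⁴`, and Young's inequality with exponents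
`4/3` and `4` absorbs it into `μ ‖∇w‖₂²` and the `L²` term.
-/

section Absorption

lemma mul_pow_three_mul_le_mul_add_pow_four (a b : ℝ) :
    256 * (a ^ 3 * b) ≤ 27 * (a + b) ^ 4 := by
  -- AM–GM for `a / 3, a / 3, a / 3, b`, which is sharp at `a = 3 * b`.
  rw [← sub_nonneg]
  calc 0 ≤ (a - 3 * b) ^ 2 * ((5 * a + b) ^ 2 + 2 * (a + b) ^ 2) := by positivity
    _ = 27 * (a + b) ^ 4 - 256 * (a ^ 3 * b) := by ring

lemma le_mul_add_of_pow_four_le {μ P Q M J : ℝ} (hμ : 0 < μ) (hP : 0 ≤ P) (hQ : 0 ≤ Q)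
    (hM : 0 ≤ M) (hJ : J ^ 4 ≤ 8 * P ^ 3 * Q * M) :
    J ≤ μ * P + 27 / (32 * μ ^ 3) * M * Q := by
  set K := 27 / (32 * μ ^ 3) * M * Q with hK
  have hsum : 0 ≤ μ * P + K := by positivity
  have hcube : 256 * ((μ * P) ^ 3 * K) = 27 * (8 * P ^ 3 * Q * M) := by
    rw [hK]
    field_simp
    ring
  have hpow : J ^ 4 ≤ (μ * P + K) ^ 4 := by
    linarith [mul_pow_three_mul_le_mul_add_pow_four (μ * P) K]
  exact le_of_pow_le_pow_left₀ four_ne_zero hsum hpow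

end Absorption

section Forchheimer

variable {E : Type*} [NormedAddCommGroup E] [InnerProductSpace ℝ E]

lemma inner_smul_sub_smul_sub_nonneg {s t : ℝ} (hs : 0 ≤ s) (ht : 0 ≤ t) {a b : E}
    (h : 0 ≤ (s * ‖a‖ - t * ‖b‖) * (‖a‖ - ‖b‖)) :
    0 ≤ ⟪s • a - t • b, a - b⟫ := by
  have expansion : ⟪s • a - t • b, a - b⟫ =
      (s * ‖a‖ - t * ‖b‖) * (‖a‖ - ‖b‖) + (s + t) * (‖a‖ * ‖b‖ - ⟪a, b⟫) := by
    simp only [inner_sub_left, inner_sub_right, real_inner_smul_left, real_inner_self_eq_norm_sq,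
      real_inner_comm a b]
    ring
  have cauchy_schwarz : 0 ≤ ‖a‖ * ‖b‖ - ⟪a, b⟫ := sub_nonneg.2 (real_inner_le_norm a b)
  rw [expansion]
  positivity

lemma inner_norm_rpow_smul_sub_nonneg {r : ℝ} (hr : 0 < r) (a b : E) :
    0 ≤ ⟪‖a‖ ^ (r - 1) • a - ‖b‖ ^ (r - 1) • b, a - b⟫ := by
  have rpow_mul_norm (c : E) : ‖c‖ ^ (r - 1) * ‖c‖ = ‖c‖ ^ r := by
    rw [← Real.rpow_add_one' (norm_nonneg c) (by simpa using hr.ne'), sub_add_cancel]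
  refine inner_smul_sub_smul_sub_nonneg (by positivity) (by positivity) ?_
  rw [rpow_mul_norm, rpow_mul_norm]
  rcases le_total ‖a‖ ‖b‖ with hab | hba
  · exact mul_nonneg_of_nonpos_of_nonpos
      (sub_nonpos.2 (Real.rpow_le_rpow (norm_nonneg a) hab hr.le)) (sub_nonpos.2 hab)
  · exact mul_nonneg
      (sub_nonneg.2 (Real.rpow_le_rpow (norm_nonneg b) hba hr.le)) (sub_nonneg.2 hba)

end Forchheimer

section Integral

lemma sq_integral_mul_le {α : Type*} [MeasurableSpace α] {ν : Measure α} {f g : α → ℝ}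
    (hf : MemLp f 2 ν) (hg : MemLp g 2 ν) :
    (∫ x, f x * g x ∂ν) ^ 2 ≤ (∫ x, f x ^ 2 ∂ν) * ∫ x, g x ^ 2 ∂ν := by
  have inner_toLp {f g : α → ℝ} (hf : MemLp f 2 ν) (hg : MemLp g 2 ν) :
      ⟪hf.toLp f, hg.toLp g⟫ = ∫ x, f x * g x ∂ν := by
    rw [L2.inner_def]
    refine integral_congr_ae ?_
    filter_upwards [hf.coeFn_toLp, hg.coeFn_toLp] with x hfx hgx
    simp [hfx, hgx, mul_comm]
  simpa only [inner_toLp, sq] using real_inner_mul_inner_self_le (hf.toLp f) (hg.toLp g)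

lemma integrable_of_continuous_of_forall_eq_zero {X E F : Type*} [TopologicalSpace X]
    [MeasurableSpace X] [OpensMeasurableSpace X] {ν : Measure X} [IsFiniteMeasureOnCompacts ν]
    [NormedAddCommGroup E] [Zero F] {f : X → E} {g : X → F} (hf : Continuous f)
    (hg : HasCompactSupport g) (hfg : ∀ x, g x = 0 → f x = 0) : Integrable f ν :=
  hf.integrable_of_hasCompactSupport (hg.mono fun x hfx hgx => hfx (hfg x hgx))

lemma integrable_inner_fderiv_apply {E F : Type*} [NormedAddCommGroup E] [NormedSpace ℝ E]
    [MeasurableSpace E] [OpensMeasurableSpace E] {ν : Measure E} [IsFiniteMeasureOnCompacts ν]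
    [NormedAddCommGroup F] [InnerProductSpace ℝ F] {u : E → E} {f g : E → F} (hu : Continuous u)
    (hus : HasCompactSupport u) (hf : ContDiff ℝ 1 f) (hg : Continuous g) :
    Integrable (fun x => ⟪g x, fderiv ℝ f x (u x)⟫) ν := by
  have : Continuous (fderiv ℝ f) := hf.continuous_fderiv one_ne_zero
  exact integrable_of_continuous_of_forall_eq_zero (by fun_prop) hus fun x hx => by simp [hx]

end Integral

section Gradient

variable {ι F : Type*} [Fintype ι] [DecidableEq ι]

lemma map_eq_sum_smul_map_single [NormedAddCommGroup F] [NormedSpace ℝ F]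
    (L : EuclideanSpace ℝ ι →L[ℝ] F) (y : EuclideanSpace ℝ ι) :
    L y = ∑ i, y i • L (EuclideanSpace.single i 1) := by
  conv_lhs => rw [← (EuclideanSpace.basisFun ι ℝ).sum_repr y]
  simp

lemma opNorm_le_sum_norm_map_single [NormedAddCommGroup F] [NormedSpace ℝ F]
    (L : (ι → ℝ) →L[ℝ] F) : ‖L‖ ≤ ∑ i, ‖L (Pi.single i 1)‖ := by
  refine L.opNorm_le_bound (by positivity) fun y => ?_
  calc ‖L y‖ = ‖∑ i, y i • L (Pi.single i 1)‖ := by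
        conv_lhs => rw [pi_eq_sum_univ' y, map_sum]
        simp only [map_smul, Pi.single]
    _ ≤ ∑ i, ‖y i‖ * ‖L (Pi.single i 1)‖ := by
        simpa only [norm_smul] using norm_sum_le Finset.univ fun i => y i • L (Pi.single i 1)
    _ ≤ ∑ i, ‖y‖ * ‖L (Pi.single i 1)‖ := by
        gcongr with i
        exact norm_le_pi_norm y i
    _ = (∑ i, ‖L (Pi.single i 1)‖) * ‖y‖ := by rw [← Finset.mul_sum, mul_comm]

/-- The pointwise Euclidean (Frobenius) norm `|∇f| = (∑ᵢ |∂ᵢf|²)^(1/2)` of the derivative of `f`,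
as opposed to the operator norm `‖fderiv ℝ f x‖`. -/
noncomputable def gradNorm [NormedAddCommGroup F] [NormedSpace ℝ F] (f : EuclideanSpace ℝ ι → F)
    (x : EuclideanSpace ℝ ι) : ℝ :=
  √(∑ i, ‖fderiv ℝ f x (EuclideanSpace.single i 1)‖ ^ 2)

section NormedSpace

variable [NormedAddCommGroup F] [NormedSpace ℝ F] {f : EuclideanSpace ℝ ι → F}

lemma gradNorm_sq (f : EuclideanSpace ℝ ι → F) (x : EuclideanSpace ℝ ι) :
    gradNorm f x ^ 2 = ∑ i, ‖fderiv ℝ f x (EuclideanSpace.single i 1)‖ ^ 2 :=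
  Real.sq_sqrt (by positivity)

lemma continuous_gradNorm (hf : ContDiff ℝ 1 f) : Continuous (gradNorm f) := by
  have : Continuous (fderiv ℝ f) := hf.continuous_fderiv one_ne_zero
  unfold gradNorm
  fun_prop

lemma memLp_gradNorm (hf : ContDiff ℝ 1 f) (hfs : HasCompactSupport f) (p : ENNReal) :
    MemLp (gradNorm f) p :=
  (continuous_gradNorm hf).memLp_of_hasCompactSupport <|
    (hfs.fderiv ℝ).mono fun x hx hx' => hx (by simp [gradNorm, hx'])

lemma norm_fderiv_apply_le_gradNorm_mul (f : EuclideanSpace ℝ ι → F) (x y : EuclideanSpace ℝ ι) :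
    ‖fderiv ℝ f x y‖ ≤ gradNorm f x * ‖y‖ := by
  calc ‖fderiv ℝ f x y‖ = ‖∑ i, y i • fderiv ℝ f x (EuclideanSpace.single i 1)‖ := by
        rw [← map_eq_sum_smul_map_single]
    _ ≤ ∑ i, ‖fderiv ℝ f x (EuclideanSpace.single i 1)‖ * ‖y i‖ := by
        simpa only [norm_smul, mul_comm] using
          norm_sum_le Finset.univ fun i => y i • fderiv ℝ f x (EuclideanSpace.single i 1)
    _ ≤ gradNorm f x * ‖y‖ := by
        rw [EuclideanSpace.norm_eq]
        exact Real.sum_mul_le_sqrt_mul_sqrt _ _ _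

lemma sum_norm_fderiv_single_le (f : EuclideanSpace ℝ ι → F) (x : EuclideanSpace ℝ ι) :
    ∑ i, ‖fderiv ℝ f x (EuclideanSpace.single i 1)‖ ≤ √(Fintype.card ι) * gradNorm f x := by
  simpa [gradNorm] using Real.sum_mul_le_sqrt_mul_sqrt Finset.univ (fun _ => (1 : ℝ))
    fun i => ‖fderiv ℝ f x (EuclideanSpace.single i 1)‖

lemma lintegral_enorm_rpow_le_lintegral_sum_enorm_fderiv {p : ℝ}
    (hp : Real.HolderConjugate (Fintype.card ι) p) (hf : ContDiff ℝ 1 f)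
    (hfs : HasCompactSupport f) :
    ∫⁻ x, ‖f x‖ₑ ^ p ≤ (∫⁻ x, ∑ i, ‖fderiv ℝ f x (EuclideanSpace.single i 1)‖ₑ) ^ p := by
  let e : (ι → ℝ) ≃L[ℝ] EuclideanSpace ℝ ι := (EuclideanSpace.equiv ι ℝ).symm
  have he : MeasurePreserving e := PiLp.volume_preserving_toLp ι
  have hme : MeasurableEmbedding e := e.toHomeomorph.measurableEmbedding
  have enorm_fderiv_le (y : ι → ℝ) : ‖fderiv ℝ (f ∘ e) y‖ₑ ≤
      ∑ i, ‖fderiv ℝ f (e y) (EuclideanSpace.single i 1)‖ₑ := by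
    rw [e.comp_right_fderiv]
    simp only [← ofReal_norm, ← ENNReal.ofReal_sum_of_nonneg fun _ _ => norm_nonneg _]
    exact ENNReal.ofReal_le_ofReal (opNorm_le_sum_norm_map_single _)
  rw [← he.lintegral_comp_emb hme, ← he.lintegral_comp_emb hme]
  calc ∫⁻ y, ‖f (e y)‖ₑ ^ p ≤ (∫⁻ y, ‖fderiv ℝ (f ∘ e) y‖ₑ) ^ p :=
        lintegral_pow_le_pow_lintegral_fderiv_aux hp (hf.comp e.contDiff)
          (hfs.comp_homeomorph e.toHomeomorph)
    _ ≤ _ := ENNReal.rpow_le_rpow (lintegral_mono enorm_fderiv_le) hp.symm.nonneg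

lemma integral_norm_rpow_le_integral_sum_norm_fderiv {p : ℝ}
    (hp : Real.HolderConjugate (Fintype.card ι) p) (hf : ContDiff ℝ 1 f)
    (hfs : HasCompactSupport f) :
    ∫ x, ‖f x‖ ^ p ≤ (∫ x, ∑ i, ‖fderiv ℝ f x (EuclideanSpace.single i 1)‖) ^ p := by
  have : Continuous (fderiv ℝ f) := hf.continuous_fderiv one_ne_zero
  have hfp : Integrable fun x => ‖f x‖ ^ p :=
    integrable_of_continuous_of_forall_eq_zero
      (hf.continuous.norm.rpow_const fun _ => Or.inr hp.symm.nonneg) hfs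
      fun x hx => by simp [hx, hp.symm.ne_zero]
  have hsum : Integrable fun x => ∑ i, ‖fderiv ℝ f x (EuclideanSpace.single i 1)‖ :=
    integrable_of_continuous_of_forall_eq_zero (by fun_prop) (hfs.fderiv ℝ)
      fun x hx => by simp [hx]
  have hsum_nonneg : 0 ≤ ∫ x, ∑ i, ‖fderiv ℝ f x (EuclideanSpace.single i 1)‖ :=
    integral_nonneg fun x => by positivity
  rw [← ENNReal.ofReal_le_ofReal_iff (by positivity),
    ← ENNReal.ofReal_rpow_of_nonneg hsum_nonneg hp.symm.nonneg,
    ofReal_integral_eq_lintegral_ofReal hfp (.of_forall fun x => by positivity),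
    ofReal_integral_eq_lintegral_ofReal hsum (.of_forall fun x => by positivity)]
  simpa only [ENNReal.ofReal_sum_of_nonneg fun _ _ => norm_nonneg _, ofReal_norm,
    ← ENNReal.ofReal_rpow_of_nonneg (norm_nonneg _) hp.symm.nonneg] using
    lintegral_enorm_rpow_le_lintegral_sum_enorm_fderiv hp hf hfs

end NormedSpace

section Ladyzhenskaya

variable [NormedAddCommGroup F] [InnerProductSpace ℝ F] {f : EuclideanSpace ℝ ι → F}

lemma sum_norm_fderiv_norm_sq_le (hf : Differentiable ℝ f) (x : EuclideanSpace ℝ ι) :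
    ∑ i, ‖fderiv ℝ (fun y => ‖f y‖ ^ 2) x (EuclideanSpace.single i 1)‖ ≤
      2 * √(Fintype.card ι) * (gradNorm f x * ‖f x‖) := by
  have norm_partial_le (i : ι) :
      ‖fderiv ℝ (fun y => ‖f y‖ ^ 2) x (EuclideanSpace.single i 1)‖ ≤
        2 * ‖f x‖ * ‖fderiv ℝ f x (EuclideanSpace.single i 1)‖ := by
    rw [(hf x).hasFDerivAt.norm_sq.fderiv]
    simpa [abs_mul, mul_assoc] using norm_inner_le_norm (𝕜 := ℝ) (f x)
      (fderiv ℝ f x (EuclideanSpace.single i 1))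
  calc _ ≤ ∑ i, 2 * ‖f x‖ * ‖fderiv ℝ f x (EuclideanSpace.single i 1)‖ :=
        Finset.sum_le_sum fun i _ => norm_partial_le i
    _ = 2 * ‖f x‖ * ∑ i, ‖fderiv ℝ f x (EuclideanSpace.single i 1)‖ := by rw [Finset.mul_sum]
    _ ≤ 2 * ‖f x‖ * (√(Fintype.card ι) * gradNorm f x) := by
        gcongr
        exact sum_norm_fderiv_single_le f x
    _ = _ := by ring

lemma integral_norm_pow_four_le_of_card_eq_two (hι : Fintype.card ι = 2) (hf : ContDiff ℝ 1 f)
    (hfs : HasCompactSupport f) :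
    ∫ x, ‖f x‖ ^ 4 ≤ 8 * ((∫ x, gradNorm f x ^ 2) * ∫ x, ‖f x‖ ^ 2) := by
  have hp : Real.HolderConjugate (Fintype.card ι) 2 := by
    simpa [hι] using Real.HolderConjugate.two_two
  have hsq : ContDiff ℝ 1 fun x => ‖f x‖ ^ 2 := hf.norm_sq ℝ
  have hsq' := hsq.continuous_fderiv one_ne_zero
  have hsqs : HasCompactSupport fun x => ‖f x‖ ^ 2 := hfs.mono fun x hx hx' => hx (by simp [hx'])
  have hgrad := continuous_gradNorm hf
  have hfc := hf.continuous
  have integral_sum_le : ∫ x, ∑ i, ‖fderiv ℝ (fun y => ‖f y‖ ^ 2) x (EuclideanSpace.single i 1)‖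
      ≤ 2 * √2 * ∫ x, gradNorm f x * ‖f x‖ := by
    rw [← integral_const_mul]
    refine integral_mono
      (integrable_of_continuous_of_forall_eq_zero (by fun_prop) (hsqs.fderiv ℝ)
        fun x hx => by simp [hx])
      (integrable_of_continuous_of_forall_eq_zero (by fun_prop) hfs fun x hx => by simp [hx])
      fun x => ?_
    simpa [hι] using sum_norm_fderiv_norm_sq_le (hf.differentiable one_ne_zero) x
  calc ∫ x, ‖f x‖ ^ 4 = ∫ x, ‖‖f x‖ ^ 2‖ ^ (2 : ℝ) := by
        simp only [norm_pow, norm_norm, Real.rpow_ofNat, ← pow_mul]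
    _ ≤ (∫ x, ∑ i, ‖fderiv ℝ (fun y => ‖f y‖ ^ 2) x (EuclideanSpace.single i 1)‖) ^ (2 : ℝ) :=
        integral_norm_rpow_le_integral_sum_norm_fderiv hp hsq hsqs
    _ ≤ (2 * √2 * ∫ x, gradNorm f x * ‖f x‖) ^ (2 : ℝ) := by
        gcongr
    _ = 8 * (∫ x, gradNorm f x * ‖f x‖) ^ 2 := by
        rw [Real.rpow_ofNat, mul_pow, mul_pow, Real.sq_sqrt zero_le_two]
        norm_num
    _ ≤ 8 * ((∫ x, gradNorm f x ^ 2) * ∫ x, ‖f x‖ ^ 2) := by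
        gcongr
        exact sq_integral_mul_le (memLp_gradNorm hf hfs 2)
          (hfc.norm.memLp_of_hasCompactSupport hfs.norm)

end Ladyzhenskaya

end Gradient

section Convection

variable {ι F : Type*} [Fintype ι] [DecidableEq ι] [NormedAddCommGroup F] [InnerProductSpace ℝ F]

/-- The divergence `∑ᵢ ∂ᵢuᵢ` of a vector field on Euclidean space, in the standard
coordinates; a field is incompressible when it vanishes everywhere. -/
noncomputable def divergence (u : EuclideanSpace ℝ ι → EuclideanSpace ℝ ι)
    (x : EuclideanSpace ℝ ι) : ℝ :=
  ∑ i, fderiv ℝ u x (EuclideanSpace.single i 1) i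

variable {u v w : EuclideanSpace ℝ ι → EuclideanSpace ℝ ι}

lemma divergence_sub (hu : Differentiable ℝ u) (hv : Differentiable ℝ v)
    (x : EuclideanSpace ℝ ι) : divergence (u - v) x = divergence u x - divergence v x := by
  simp [divergence, fderiv_sub (hu x) (hv x), Finset.sum_sub_distrib]

lemma integral_fderiv_apply_eq_neg_integral_divergence_mul {h : EuclideanSpace ℝ ι → ℝ}
    (hu : ContDiff ℝ 1 u) (hus : HasCompactSupport u) (hh : ContDiff ℝ 1 h) :
    ∫ x, fderiv ℝ h x (u x) = -∫ x, divergence u x * h x := by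
  have : Continuous (fderiv ℝ u) := hu.continuous_fderiv one_ne_zero
  have : Continuous (fderiv ℝ h) := hh.continuous_fderiv one_ne_zero
  have huc := hu.continuous
  have hhc := hh.continuous
  have fderiv_coord (i : ι) (x : EuclideanSpace ℝ ι) :
      fderiv ℝ (fun y => u y i) x (EuclideanSpace.single i 1) =
        fderiv ℝ u x (EuclideanSpace.single i 1) i :=
    DFunLike.congr_fun ((EuclideanSpace.proj i : EuclideanSpace ℝ ι →L[ℝ] ℝ).hasFDerivAt.comp x
      (hu.differentiable one_ne_zero x).hasFDerivAt).fderiv (EuclideanSpace.single i 1)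
  have integrable_left (i : ι) :
      Integrable fun x => u x i * fderiv ℝ h x (EuclideanSpace.single i 1) :=
    integrable_of_continuous_of_forall_eq_zero (by fun_prop) hus fun x hx => by simp [hx]
  have integrable_right (i : ι) :
      Integrable fun x => fderiv ℝ u x (EuclideanSpace.single i 1) i * h x :=
    integrable_of_continuous_of_forall_eq_zero (by fun_prop) (hus.fderiv ℝ)
      fun x hx => by simp [hx]
  have by_parts (i : ι) : ∫ x, u x i * fderiv ℝ h x (EuclideanSpace.single i 1) =
      -∫ x, fderiv ℝ u x (EuclideanSpace.single i 1) i * h x := by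
    simpa only [fderiv_coord] using integral_mul_fderiv_eq_neg_fderiv_mul_of_integrable
      (f := fun x => u x i) (by simpa only [fderiv_coord] using integrable_right i)
      (integrable_left i)
      (integrable_of_continuous_of_forall_eq_zero (by fun_prop) hus fun x hx => by simp [hx])
      (fun x _ => by have := hu.differentiable one_ne_zero; fun_prop)
      (fun x _ => hh.differentiable one_ne_zero x)
  simp only [map_eq_sum_smul_map_single (fderiv ℝ h _) (u _), smul_eq_mul, divergence,
    Finset.sum_mul]
  rw [integral_finsetSum _ fun i _ => integrable_left i,
    integral_finsetSum _ fun i _ => integrable_right i, ← Finset.sum_neg_distrib]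
  exact Finset.sum_congr rfl fun i _ => by_parts i

lemma integral_inner_fderiv_apply_eq_neg {f g : EuclideanSpace ℝ ι → F} (hu : ContDiff ℝ 1 u)
    (hus : HasCompactSupport u) (hdiv : ∀ x, divergence u x = 0) (hf : ContDiff ℝ 1 f)
    (hg : ContDiff ℝ 1 g) :
    ∫ x, ⟪g x, fderiv ℝ f x (u x)⟫ = -∫ x, ⟪f x, fderiv ℝ g x (u x)⟫ := by
  have leibniz (x : EuclideanSpace ℝ ι) : fderiv ℝ (fun y => ⟪f y, g y⟫) x (u x) =
      ⟪f x, fderiv ℝ g x (u x)⟫ + ⟪g x, fderiv ℝ f x (u x)⟫ := by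
    rw [fderiv_inner_apply ℝ (hf.differentiable one_ne_zero x) (hg.differentiable one_ne_zero x),
      real_inner_comm (g x)]
  have hzero := integral_fderiv_apply_eq_neg_integral_divergence_mul hu hus (hf.inner ℝ hg)
  simp only [leibniz, hdiv, zero_mul, integral_zero, neg_zero] at hzero
  rw [integral_add (integrable_inner_fderiv_apply hu.continuous hus hg hf.continuous)
    (integrable_inner_fderiv_apply hu.continuous hus hf hg.continuous)] at hzero
  linarith

lemma integral_inner_fderiv_apply_self_eq_zero {f : EuclideanSpace ℝ ι → F} (hu : ContDiff ℝ 1 u)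
    (hus : HasCompactSupport u) (hdiv : ∀ x, divergence u x = 0) (hf : ContDiff ℝ 1 f) :
    ∫ x, ⟪f x, fderiv ℝ f x (u x)⟫ = 0 :=
  self_eq_neg.1 (integral_inner_fderiv_apply_eq_neg hu hus hdiv hf hf)

lemma integral_inner_convection_sub (hu : ContDiff ℝ 1 u) (hv : ContDiff ℝ 1 v)
    (hus : HasCompactSupport u) (hvs : HasCompactSupport v) (hdivu : ∀ x, divergence u x = 0)
    (hdivv : ∀ x, divergence v x = 0) :
    ∫ x, ⟪fderiv ℝ u x (u x) - fderiv ℝ v x (v x), (u - v) x⟫ =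
      -∫ x, ⟪v x, fderiv ℝ (u - v) x ((u - v) x)⟫ := by
  have hw : ContDiff ℝ 1 (u - v) := hu.sub hv
  have hws : HasCompactSupport (u - v) := hus.sub hvs
  have hud := hu.differentiable one_ne_zero
  have hvd := hv.differentiable one_ne_zero
  have hdivw (x : EuclideanSpace ℝ ι) : divergence (u - v) x = 0 := by
    rw [divergence_sub hud hvd, hdivu, hdivv, sub_zero]
  have splitting (x : EuclideanSpace ℝ ι) :
      ⟪fderiv ℝ u x (u x) - fderiv ℝ v x (v x), (u - v) x⟫ =
        ⟪(u - v) x, fderiv ℝ (u - v) x (u x)⟫ + ⟪(u - v) x, fderiv ℝ v x ((u - v) x)⟫ := by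
    rw [real_inner_comm, ← inner_add_right, fderiv_sub (hud x) (hvd x)]
    simp
  simp only [splitting]
  rw [integral_add (integrable_inner_fderiv_apply hu.continuous hus hw hw.continuous)
      (integrable_inner_fderiv_apply hw.continuous hws hv hw.continuous),
    integral_inner_fderiv_apply_self_eq_zero hu hus hdivu hw, zero_add,
    integral_inner_fderiv_apply_eq_neg hw hws hdivw hv hw]

lemma sq_integral_inner_fderiv_apply_le {f g : EuclideanSpace ℝ ι → F} (hu : Continuous u)
    (hus : HasCompactSupport u) (hf : ContDiff ℝ 1 f) (hfs : HasCompactSupport f)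
    (hg : Continuous g) :
    (∫ x, ⟪g x, fderiv ℝ f x (u x)⟫) ^ 2 ≤
      (∫ x, gradNorm f x ^ 2) * ∫ x, (‖u x‖ * ‖g x‖) ^ 2 := by
  have hgrad := continuous_gradNorm hf
  have norm_integral_le : ‖∫ x, ⟪g x, fderiv ℝ f x (u x)⟫‖ ≤
      ∫ x, gradNorm f x * (‖u x‖ * ‖g x‖) := by
    refine norm_integral_le_of_norm_le (integrable_of_continuous_of_forall_eq_zero (by fun_prop)
      hus fun x hx => by simp [hx]) (.of_forall fun x => ?_)
    calc ‖⟪g x, fderiv ℝ f x (u x)⟫‖ ≤ ‖g x‖ * ‖fderiv ℝ f x (u x)‖ := norm_inner_le_norm _ _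
      _ ≤ ‖g x‖ * (gradNorm f x * ‖u x‖) := by
          gcongr
          exact norm_fderiv_apply_le_gradNorm_mul f x (u x)
      _ = gradNorm f x * (‖u x‖ * ‖g x‖) := by ring
  calc (∫ x, ⟪g x, fderiv ℝ f x (u x)⟫) ^ 2
      ≤ (∫ x, gradNorm f x * (‖u x‖ * ‖g x‖)) ^ 2 :=
        sq_le_sq.2 (norm_integral_le.trans (le_abs_self _))
    _ ≤ (∫ x, gradNorm f x ^ 2) * ∫ x, (‖u x‖ * ‖g x‖) ^ 2 :=
        sq_integral_mul_le (memLp_gradNorm hf hfs 2)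
          ((hu.norm.mul hg.norm).memLp_of_hasCompactSupport hus.norm.mul_right)

lemma integral_inner_fderiv_apply_self_pow_four_le (hι : Fintype.card ι = 2) (hv : Continuous v)
    (hvs : HasCompactSupport v) (hw : ContDiff ℝ 1 w) (hws : HasCompactSupport w) :
    (∫ x, ⟪v x, fderiv ℝ w x (w x)⟫) ^ 4 ≤
      8 * (∫ x, gradNorm w x ^ 2) ^ 3 * (∫ x, ‖w x‖ ^ 2) * ∫ x, ‖v x‖ ^ 4 := by
  have memLp_norm_sq {f : EuclideanSpace ℝ ι → EuclideanSpace ℝ ι} (hf : Continuous f)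
      (hfs : HasCompactSupport f) : MemLp (fun x => ‖f x‖ ^ 2) 2 :=
    (hf.norm.pow 2).memLp_of_hasCompactSupport (hfs.mono fun x hx hx' => hx (by simp [hx']))
  have holder : (∫ x, (‖w x‖ * ‖v x‖) ^ 2) ^ 2 ≤ (∫ x, ‖w x‖ ^ 4) * ∫ x, ‖v x‖ ^ 4 := by
    simpa only [mul_pow, ← pow_mul] using
      sq_integral_mul_le (memLp_norm_sq hw.continuous hws) (memLp_norm_sq hv hvs)
  calc (∫ x, ⟪v x, fderiv ℝ w x (w x)⟫) ^ 4
      = ((∫ x, ⟪v x, fderiv ℝ w x (w x)⟫) ^ 2) ^ 2 := by ring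
    _ ≤ ((∫ x, gradNorm w x ^ 2) * ∫ x, (‖w x‖ * ‖v x‖) ^ 2) ^ 2 := by
        gcongr
        exact sq_integral_inner_fderiv_apply_le hw.continuous hws hw hws hv
    _ = (∫ x, gradNorm w x ^ 2) ^ 2 * (∫ x, (‖w x‖ * ‖v x‖) ^ 2) ^ 2 := mul_pow _ _ _
    _ ≤ (∫ x, gradNorm w x ^ 2) ^ 2 *
          (8 * ((∫ x, gradNorm w x ^ 2) * ∫ x, ‖w x‖ ^ 2) * ∫ x, ‖v x‖ ^ 4) := by
        grw [holder, integral_norm_pow_four_le_of_card_eq_two hι hw hws]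
    _ = _ := by ring

end Convection

section Coordinates

variable {ι κ : Type*} [Fintype ι] [DecidableEq ι] [Fintype κ]

lemma sum_sum_fderiv_single_sq_eq_gradNorm_sq (f : EuclideanSpace ℝ ι → EuclideanSpace ℝ κ)
    (x : EuclideanSpace ℝ ι) :
    ∑ i, ∑ j, fderiv ℝ f x (EuclideanSpace.single i 1) j ^ 2 = gradNorm f x ^ 2 := by
  simp only [gradNorm_sq, EuclideanSpace.real_norm_sq_eq]

lemma sum_sum_mul_map_single_sub_mul_eq_inner (L M : EuclideanSpace ℝ ι →L[ℝ] EuclideanSpace ℝ κ)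
    (a b : EuclideanSpace ℝ ι) (c : EuclideanSpace ℝ κ) :
    ∑ i, ∑ j, (a i * L (EuclideanSpace.single i 1) j - b i * M (EuclideanSpace.single i 1) j) * c j
      = ⟪L a - M b, c⟫ := by
  rw [Finset.sum_comm, map_eq_sum_smul_map_single L a, map_eq_sum_smul_map_single M b]
  simp only [PiLp.inner_apply, PiLp.sub_apply, WithLp.ofLp_sum, WithLp.ofLp_smul,
    Finset.sum_apply, Pi.smul_apply, smul_eq_mul, ← Finset.sum_sub_distrib, RCLike.inner_apply,
    conj_trivial, Finset.mul_sum, mul_comm]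

end Coordinates

theorem cbf_local_monotonicity_2d_general (r μ β N : ℝ) (hr : 0 < r) (hμ : 0 < μ) (hβ : 0 ≤ β)
    (u v w : EuclideanSpace ℝ (Fin 2) → EuclideanSpace ℝ (Fin 2))
    (hu : ContDiff ℝ 1 u) (hv : ContDiff ℝ 1 v)
    (hus : HasCompactSupport u) (hvs : HasCompactSupport v)
    (hdivu : ∀ x, divergence u x = 0) (hdivv : ∀ x, divergence v x = 0)
    (hw : ∀ x, w x = u x - v x) (hvN : ∫ x, ‖v x‖ ^ 4 ≤ N ^ 4) :
    0 ≤ μ * (∫ x, ∑ i, ∑ j, (fderiv ℝ w x (EuclideanSpace.single i 1) j) ^ 2) +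
        (∫ x, ∑ i, ∑ j,
          (u x i * fderiv ℝ u x (EuclideanSpace.single i 1) j -
            v x i * fderiv ℝ v x (EuclideanSpace.single i 1) j) * w x j) +
        β * (∫ x, ⟪(‖u x‖ ^ (r - 1)) • u x - (‖v x‖ ^ (r - 1)) • v x, w x⟫) +
        27 / (32 * μ ^ 3) * N ^ 4 * ∫ x, ‖w x‖ ^ 2 := by
  obtain rfl : w = u - v := funext hw
  simp only [sum_sum_fderiv_single_sq_eq_gradNorm_sq, sum_sum_mul_map_single_sub_mul_eq_inner]
  rw [integral_inner_convection_sub hu hv hus hvs hdivu hdivv]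
  have hgrad : 0 ≤ ∫ x, gradNorm (u - v) x ^ 2 := integral_nonneg fun x => sq_nonneg _
  have hL2 : 0 ≤ ∫ x, ‖(u - v) x‖ ^ 2 := integral_nonneg fun x => sq_nonneg _
  have forchheimer_nonneg :
      0 ≤ β * ∫ x, ⟪‖u x‖ ^ (r - 1) • u x - ‖v x‖ ^ (r - 1) • v x, (u - v) x⟫ :=
    mul_nonneg hβ (integral_nonneg fun x => inner_norm_rpow_smul_sub_nonneg hr (u x) (v x))
  have convection_le : ∫ x, ⟪v x, fderiv ℝ (u - v) x ((u - v) x)⟫ ≤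
      μ * (∫ x, gradNorm (u - v) x ^ 2) +
        27 / (32 * μ ^ 3) * N ^ 4 * ∫ x, ‖(u - v) x‖ ^ 2 := by
    refine le_mul_add_of_pow_four_le hμ hgrad hL2 (by positivity) ?_
    grw [← hvN]
    exact integral_inner_fderiv_apply_self_pow_four_le (Fintype.card_fin 2) hv.continuous hvs
      (hu.sub hv) (hus.sub hvs)
  linarith

/-- Local monotonicity of the 2D CBF operator on `L⁴`-balls of radius `N`, for `r ∈ [1,3]`:
`μ‖∇w‖² + ⟨B(u) − B(v), w⟩ + β⟨C(u) − C(v), w⟩ + (27/(32μ³))N⁴‖w‖² ≥ 0` with `w = u − v`. -/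
theorem cbf_local_monotonicity_2d (r μ β N : ℝ)
    (hr : r ∈ Set.Icc (1 : ℝ) 3) (hμ : 0 < μ) (hβ : 0 < β) (hN : 0 ≤ N)
    (u v w : EuclideanSpace ℝ (Fin 2) → EuclideanSpace ℝ (Fin 2))
    (hu : ContDiff ℝ (⊤ : ℕ∞) u) (hv : ContDiff ℝ (⊤ : ℕ∞) v)
    (hus : HasCompactSupport u) (hvs : HasCompactSupport v)
    (hdivu : ∀ x, ∑ i, fderiv ℝ u x (EuclideanSpace.single i 1) i = 0)
    (hdivv : ∀ x, ∑ i, fderiv ℝ v x (EuclideanSpace.single i 1) i = 0)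
    (hw : ∀ x, w x = u x - v x)
    (hvN : (∫ x, ‖v x‖ ^ 4) ≤ N ^ 4) :
    0 ≤ μ * (∫ x, ∑ i, ∑ j, (fderiv ℝ w x (EuclideanSpace.single i 1) j) ^ 2) +
        (∫ x, ∑ i, ∑ j,
          (u x i * fderiv ℝ u x (EuclideanSpace.single i 1) j -
            v x i * fderiv ℝ v x (EuclideanSpace.single i 1) j) * w x j) +
        β * (∫ x, ⟪(‖u x‖ ^ (r - 1)) • u x - (‖v x‖ ^ (r - 1)) • v x, w x⟫) +
        27 / (32 * μ ^ 3) * N ^ 4 * ∫ x, ‖w x‖ ^ 2 :=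
  cbf_local_monotonicity_2d_general r μ β N (zero_lt_one.trans_le hr.1) hμ hβ.le u v w
    (hu.of_le (by exact_mod_cast le_top)) (hv.of_le (by exact_mod_cast le_top)) hus hvs
    hdivu hdivv hw hvN
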